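/- arXiv:0707.0152 — 2 statements merged into one kernel-verified Lean document; each statement's English description precedes it below -/
import Mathlib

section
/- There exists an absolute constant C > 0 such that for every θ ∈ (0,1) and every positive integer n, ∫_{(0,∞)⁴} G(s,t,u,v) ds dt du dv ≤ C · n^{2-θ} θ^{-2} (1-θ)^{-3}; and there exists an absolute constant c > 0 such that for every θ ∈ (0,1) and every positive integer n with n^{1-θ} ≥ 8, ∫_{(0,∞)⁴} G(s,t,u,v) ds dt du dv ≥ c · n^{2-θ} θ^{-2} (1-θ)^{-3}. -/
open MeasureTheory Set Real

/-- The integrand `G(s,t,u,v)` from the paper's computation of the completely 1-summing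
norm of the identity `OH_n → ℓ^n_p`, with `θ = 2/p'`. Here `p = (s, t, u, v)`. -/
noncomputable def G (θ : ℝ) (n : ℕ) (p : ℝ × ℝ × ℝ × ℝ) : ℝ :=
  (n : ℝ) ^ (2 : ℕ) * p.1 ^ (-1 - 2 * θ) * p.2.1 ^ (-1 - 2 * θ) *
    min (min (min ((n : ℝ)⁻¹ * p.1 ^ (4 : ℝ) * p.2.2.1 ^ (-2 : ℝ) * p.2.2.2 ^ (-2 : ℝ))
                  ((n : ℝ)⁻¹ * p.2.1 ^ (4 : ℝ)))
             (min (p.1 ^ (4 : ℝ) * p.2.2.1 ^ (-2 : ℝ)) (p.2.1 ^ (4 : ℝ) * p.2.2.2 ^ (-2 : ℝ))))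
        (min (min (p.2.2.1 ^ (-2 : ℝ) * p.2.2.2 ^ (-2 : ℝ)) (p.2.2.1 ^ (-2 : ℝ)))
             (min 1 (p.2.2.2 ^ (-2 : ℝ))))

/-- The region of integration. -/
def A (n : ℕ) : Set (ℝ × ℝ × ℝ × ℝ) :=
  {p | 0 < p.1 ∧ 0 < p.2.1 ∧ 0 < p.2.2.1 ∧ 0 < p.2.2.2}

lemma basic_int (α β a c : ℝ) (hα : 0 < α) (hβ : α < β) (ha : 0 < a) (hc : 0 < c) :
    ∫⁻ x in Ioi (0:ℝ), ENNReal.ofReal (x ^ (-1 - α) * min (a * x ^ β) c) =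
      ENNReal.ofReal (c ^ (1 - α / β) * a ^ (α / β) * (1 / (β - α) + 1 / α)) := by
  have hβ0 : 0 < β := hα.trans hβ
  set x0 : ℝ := (c / a) ^ (1 / β) with hx0
  have hx0p : 0 < x0 := by positivity
  have hx0β : x0 ^ β = c / a := by
    rw [hx0, ← Real.rpow_mul (by positivity)]
    rw [one_div_mul_cancel hβ0.ne', Real.rpow_one]
  have hx0α : x0 ^ (-α) = c ^ (-(α / β)) * a ^ (α / β) := by
    rw [hx0, ← Real.rpow_mul (by positivity), Real.div_rpow hc.le ha.le, div_eq_mul_inv,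
      ← Real.rpow_neg ha.le]
    congr 2 <;> ring
  have hval : c * x0 ^ (-α) = c ^ (1 - α / β) * a ^ (α / β) := by
    rw [hx0α, sub_eq_add_neg, Real.rpow_add hc, Real.rpow_one]; ring
  have hval2 : a * x0 ^ (β - α) = c ^ (1 - α / β) * a ^ (α / β) := by
    rw [sub_eq_add_neg, Real.rpow_add hx0p, hx0β, ← hval]; field_simp
  have hU : Ioi (0:ℝ) = Ioc 0 x0 ∪ Ioi x0 := (Ioc_union_Ioi_eq_Ioi hx0p.le).symm
  rw [hU, lintegral_union measurableSet_Ioi (Ioc_disjoint_Ioi le_rfl)]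
  have h1 : ∫⁻ x in Ioc 0 x0, ENNReal.ofReal (x ^ (-1 - α) * min (a * x ^ β) c) =
      ENNReal.ofReal (c ^ (1 - α / β) * a ^ (α / β) * (1 / (β - α))) := by
    have e : ∀ x ∈ Ioc 0 x0, ENNReal.ofReal (x ^ (-1 - α) * min (a * x ^ β) c) =
        ENNReal.ofReal (a * x ^ (β - α - 1)) := by
      intro x hx
      congr 1
      have : x ^ β ≤ c / a := by
        rw [← hx0β]; exact Real.rpow_le_rpow hx.1.le hx.2 hβ0.le
      rw [min_eq_left (by rw [le_div_iff₀ ha] at this; linarith)]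
      rw [show β - α - 1 = (-1 - α) + β by ring, Real.rpow_add hx.1]; ring
    rw [setLIntegral_congr_fun measurableSet_Ioc e]
    have hi : IntervalIntegrable (fun x : ℝ => x ^ (β - α - 1)) volume 0 x0 :=
      intervalIntegral.intervalIntegrable_rpow' (by linarith)
    rw [← ofReal_integral_eq_lintegral_ofReal]
    · rw [← intervalIntegral.integral_of_le hx0p.le, intervalIntegral.integral_const_mul,
        integral_rpow (Or.inl (by linarith)), ← hval2]
      rw [show β - α - 1 + 1 = β - α by ring, Real.zero_rpow (by linarith)]
      congr 1; ring
    · exact ((intervalIntegrable_iff_integrableOn_Ioc_of_le hx0p.le).1 hi).const_mul a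
    · refine (ae_restrict_iff' measurableSet_Ioc).2 (Filter.Eventually.of_forall fun x hx => ?_)
      have := hx.1
      simp only [Pi.zero_apply]; positivity
  have h2 : ∫⁻ x in Ioi x0, ENNReal.ofReal (x ^ (-1 - α) * min (a * x ^ β) c) =
      ENNReal.ofReal (c ^ (1 - α / β) * a ^ (α / β) * (1 / α)) := by
    have e : ∀ x ∈ Ioi x0, ENNReal.ofReal (x ^ (-1 - α) * min (a * x ^ β) c) =
        ENNReal.ofReal (c * x ^ (-1 - α)) := by
      intro x hx
      congr 1
      have : c / a ≤ x ^ β := by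
        rw [← hx0β]; exact Real.rpow_le_rpow hx0p.le (le_of_lt hx) hβ0.le
      rw [min_eq_right (by rw [div_le_iff₀ ha] at this; linarith)]
      ring
    rw [setLIntegral_congr_fun measurableSet_Ioi e]
    rw [← ofReal_integral_eq_lintegral_ofReal]
    · rw [integral_const_mul, integral_Ioi_rpow_of_lt (by linarith) hx0p, ← hval,
        show -1 - α + 1 = -α by ring]
      congr 1; field_simp
    · exact (integrableOn_Ioi_rpow_of_lt (by linarith) hx0p).const_mul c
    · refine (ae_restrict_iff' measurableSet_Ioi).2 (Filter.Eventually.of_forall fun x hx => ?_)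
      have : 0 < x := hx0p.trans hx
      simp only [Pi.zero_apply]; positivity
  have hba : 0 < β - α := by linarith
  rw [h1, h2, ← ENNReal.ofReal_add (by positivity) (by positivity), mul_add]

/-- The integrand without the two constraints that do not matter. -/
noncomputable def HH (θ : ℝ) (n : ℕ) (s t u v : ℝ) : ℝ :=
  (n : ℝ) ^ (2 : ℕ) * t ^ (-1 - 2 * θ) * (s ^ (-1 - 2 * θ) *
    min (((n : ℝ)⁻¹ * u ^ (-2 : ℝ) * v ^ (-2 : ℝ)) * s ^ (4 : ℝ))
      (min ((n : ℝ)⁻¹ * t ^ (4 : ℝ)) (min 1 (u ^ (-2 : ℝ)) * min 1 (v ^ (-2 : ℝ)))))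

noncomputable def gg (θ : ℝ) (v : ℝ) : ℝ :=
  v ^ (-1 - (1 - θ)) * min (1 * v ^ (2 * (1 - θ))) 1

lemma gg_eq (θ v : ℝ) (h1 : θ < 1) (hv : 0 < v) :
    (min 1 (v ^ (-2 : ℝ))) ^ (1 - θ) * v ^ (-θ) = gg θ v := by
  unfold gg
  have hm : (min 1 (v ^ (-2 : ℝ))) ^ (1 - θ) = min 1 (v ^ (-(2 * (1 - θ)))) := by
    rw [show -(2 * (1 - θ)) = (-2) * (1 - θ) by ring, Real.rpow_mul hv.le]
    rcases le_total 1 (v ^ (-2 : ℝ)) with h | h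
    · rw [min_eq_left h, min_eq_left (Real.one_le_rpow h (by linarith)), Real.one_rpow]
    · rw [min_eq_right h, min_eq_right (Real.rpow_le_one (by positivity) h (by linarith))]
  rw [hm, one_mul, mul_comm, mul_min_of_nonneg _ _ (by positivity),
    mul_min_of_nonneg _ _ (by positivity), ← Real.rpow_add hv, ← Real.rpow_add hv, mul_one, mul_one]
  congr 2 <;> ring

lemma min_rpow' {a b k : ℝ} (ha : 0 ≤ a) (hb : 0 ≤ b) (hk : 0 ≤ k) :
    (min a b) ^ k = min (a ^ k) (b ^ k) := by
  rcases le_total a b with h | h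
  · rw [min_eq_left h, min_eq_left (Real.rpow_le_rpow ha h hk)]
  · rw [min_eq_right h, min_eq_right (Real.rpow_le_rpow hb h hk)]

lemma s_int (θ : ℝ) (n : ℕ) (t u v : ℝ) (h0 : 0 < θ) (h1 : θ < 1) (hn : 0 < n)
    (ht : 0 < t) (hu : 0 < u) (hv : 0 < v) :
    ∫⁻ s in Ioi (0:ℝ), ENNReal.ofReal (HH θ n s t u v) =
      ENNReal.ofReal ((n : ℝ) ^ (2 : ℕ) *
        ((n : ℝ)⁻¹ * u ^ (-2 : ℝ) * v ^ (-2 : ℝ)) ^ (θ / 2) * (1 / (θ * (2 - θ)))) *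
      ENNReal.ofReal (t ^ (-1 - 2 * θ) * min (((n : ℝ)⁻¹) ^ (1 - θ / 2) * t ^ (4 - 2 * θ))
        ((min 1 (u ^ (-2 : ℝ)) * min 1 (v ^ (-2 : ℝ))) ^ (1 - θ / 2))) := by
  have hn' : (0:ℝ) < n := by exact_mod_cast hn
  have hw : 0 < min 1 (u ^ (-2 : ℝ)) * min 1 (v ^ (-2 : ℝ)) := by positivity
  unfold HH
  simp_rw [ENNReal.ofReal_mul (show 0 ≤ (n : ℝ) ^ (2 : ℕ) * t ^ (-1 - 2 * θ) by positivity)]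
  rw [lintegral_const_mul' _ _ ENNReal.ofReal_ne_top,
    basic_int (2 * θ) 4 _ _ (by linarith) (by linarith) (by positivity) (by positivity)]
  have h2 : 0 < 2 - θ := by linarith
  rw [← ENNReal.ofReal_mul (by positivity), ← ENNReal.ofReal_mul (by positivity)]
  congr 1
  rw [show 2 * θ / 4 = θ / 2 by ring,
    min_rpow' (by positivity) (by positivity) (by linarith),
    Real.mul_rpow (x := (n:ℝ)⁻¹) (by positivity) (by positivity), ← Real.rpow_mul ht.le,
    show (4:ℝ) * (1 - θ / 2) = 4 - 2 * θ by ring,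
    show 1 / (4 - 2 * θ) + 1 / (2 * θ) = 1 / (θ * (2 - θ)) by
      rw [show 4 - 2 * θ = 2 * (2 - θ) by ring]; field_simp; ring]
  ring

lemma t_int (θ : ℝ) (n : ℕ) (u v : ℝ) (h0 : 0 < θ) (h1 : θ < 1) (hn : 0 < n)
    (hu : 0 < u) (hv : 0 < v) :
    ∫⁻ t in Ioi (0:ℝ), ∫⁻ s in Ioi (0:ℝ), ENNReal.ofReal (HH θ n s t u v) =
      ENNReal.ofReal ((n : ℝ) ^ (2 - θ) * (1 / (4 * θ ^ 2 * (1 - θ))) * gg θ v) *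
        ENNReal.ofReal (gg θ u) := by
  have hn' : (0:ℝ) < n := by exact_mod_cast hn
  have hw : 0 < min 1 (u ^ (-2 : ℝ)) * min 1 (v ^ (-2 : ℝ)) := by positivity
  have h2 : 0 < 2 - θ := by linarith
  have h3 : 0 < 1 - θ := by linarith
  rw [setLIntegral_congr_fun measurableSet_Ioi
    (fun t ht => s_int θ n t u v h0 h1 hn ht hu hv),
    lintegral_const_mul' _ _ ENNReal.ofReal_ne_top,
    basic_int (2 * θ) (4 - 2 * θ) _ _ (by linarith) (by linarith) (by positivity) (by positivity)]
  have hg : 0 ≤ gg θ v := by unfold gg; positivity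
  rw [← ENNReal.ofReal_mul (by positivity), ← ENNReal.ofReal_mul (by positivity)]
  congr 1
  rw [← gg_eq θ u h1 hu, ← gg_eq θ v h1 hv]
  rw [← Real.rpow_mul hw.le, ← Real.rpow_mul (inv_nonneg.2 hn'.le),
    show (1 - θ / 2) * (1 - 2 * θ / (4 - 2 * θ)) = 1 - θ by
      rw [show 4 - 2 * θ = 2 * (2 - θ) by ring]; field_simp; ring,
    show (1 - θ / 2) * (2 * θ / (4 - 2 * θ)) = θ / 2 by
      rw [show 4 - 2 * θ = 2 * (2 - θ) by ring]; field_simp,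
    show 1 / (4 - 2 * θ - 2 * θ) + 1 / (2 * θ) = (2 - θ) / (4 * θ * (1 - θ)) by
      rw [show 4 - 2 * θ - 2 * θ = 4 * (1 - θ) by ring]; field_simp; ring,
    Real.mul_rpow (by positivity) (by positivity), Real.mul_rpow (by positivity) (by positivity),
    Real.mul_rpow (by positivity) (by positivity), ← Real.rpow_mul hu.le, ← Real.rpow_mul hv.le,
    show (-2) * (θ / 2) = -θ by ring]
  have hN : (n:ℝ) ^ (2 - θ) = (n:ℝ) ^ 2 * ((n:ℝ)⁻¹ ^ (θ / 2) * (n:ℝ)⁻¹ ^ (θ / 2)) := by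
    rw [← Real.rpow_add (by positivity), Real.inv_rpow hn'.le, ← Real.rpow_neg hn'.le,
      ← Real.rpow_natCast, ← Real.rpow_add hn']
    congr 1; push_cast; ring
  rw [hN]
  field_simp

lemma gg_int (θ : ℝ) (h1 : θ < 1) :
    ∫⁻ u in Ioi (0:ℝ), ENNReal.ofReal (gg θ u) = ENNReal.ofReal (2 / (1 - θ)) := by
  unfold gg
  have h3 : 0 < 1 - θ := by linarith
  rw [basic_int (1 - θ) (2 * (1 - θ)) 1 1 h3 (by linarith) one_pos one_pos]
  congr 1
  rw [Real.one_rpow, Real.one_rpow]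
  field_simp; norm_num

lemma full_int (θ : ℝ) (n : ℕ) (h0 : 0 < θ) (h1 : θ < 1) (hn : 0 < n) (V : Set ℝ)
    (hVm : MeasurableSet V) (hV : V ⊆ Ioi 0) :
    ∫⁻ p in Ioi (0:ℝ) ×ˢ Ioi (0:ℝ) ×ˢ Ioi (0:ℝ) ×ˢ V,
        ENNReal.ofReal (HH θ n p.1 p.2.1 p.2.2.1 p.2.2.2) =
      ENNReal.ofReal ((n : ℝ) ^ (2 - θ) * (1 / (2 * θ ^ 2 * (1 - θ) ^ 2))) *
        ∫⁻ v in V, ENNReal.ofReal (gg θ v) := by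
  have h3 : 0 < 1 - θ := by linarith
  have hm : Measurable (fun p : ℝ × ℝ × ℝ × ℝ =>
      ENNReal.ofReal (HH θ n p.1 p.2.1 p.2.2.1 p.2.2.2)) := by
    unfold HH; fun_prop
  have hm2 := hm.lintegral_prod_left' (μ := volume.restrict (Ioi (0:ℝ)))
  have hm3 := hm2.lintegral_prod_left' (μ := volume.restrict (Ioi (0:ℝ)))
  simp only [Measure.volume_eq_prod, ← Measure.prod_restrict]
  rw [lintegral_prod_symm _ hm.aemeasurable, lintegral_prod_symm _ hm2.aemeasurable,
    lintegral_prod_symm _ hm3.aemeasurable]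
  rw [← lintegral_const_mul' _ _ ENNReal.ofReal_ne_top]
  refine setLIntegral_congr_fun hVm fun v hv => ?_
  have hv0 : 0 < v := hV hv
  have hg : 0 ≤ gg θ v := by unfold gg; positivity
  simp only
  rw [setLIntegral_congr_fun measurableSet_Ioi
    (fun u hu => t_int θ n u v h0 h1 hn hu hv0), lintegral_const_mul' _ _ ENNReal.ofReal_ne_top,
    gg_int θ h1, ← ENNReal.ofReal_mul (by positivity), ← ENNReal.ofReal_mul (by positivity)]
  congr 1
  field_simp; norm_num

lemma A_eq (n : ℕ) : A n = Ioi (0:ℝ) ×ˢ Ioi (0:ℝ) ×ˢ Ioi (0:ℝ) ×ˢ Ioi (0:ℝ) := by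
  ext p; simp [A]

lemma min_w (u v : ℝ) (hu : 0 < u) (hv : 0 < v) :
    min (min (u ^ (-2 : ℝ) * v ^ (-2 : ℝ)) (u ^ (-2 : ℝ))) (min 1 (v ^ (-2 : ℝ))) =
      min 1 (u ^ (-2 : ℝ)) * min 1 (v ^ (-2 : ℝ)) := by
  have h1 : 0 < u ^ (-2 : ℝ) := by positivity
  have h2 : 0 < v ^ (-2 : ℝ) := by positivity
  generalize u ^ (-2 : ℝ) = a at *
  generalize v ^ (-2 : ℝ) = b at *
  rw [min_mul_of_nonneg _ _ (by positivity), one_mul, mul_min_of_nonneg _ _ h1.le, mul_one,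
    min_comm (a * b) a, min_comm]

lemma G_le (θ : ℝ) (n : ℕ) (p : ℝ × ℝ × ℝ × ℝ) (hp : p ∈ A n) :
    G θ n p ≤ HH θ n p.1 p.2.1 p.2.2.1 p.2.2.2 := by
  obtain ⟨s, t, u, v⟩ := p
  obtain ⟨hs, ht, hu, hv⟩ := hp
  simp only at hs ht hu hv
  simp only [G, HH]
  rw [min_w u v hu hv, ← mul_assoc, mul_right_comm ((n:ℝ) ^ 2)]
  refine mul_le_mul_of_nonneg_left ?_ (by positivity)
  refine le_min ?_ (le_min ?_ ?_)
  · refine ((min_le_left _ _).trans ((min_le_left _ _).trans (min_le_left _ _))).trans_eq ?_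
    ring
  · exact (min_le_left _ _).trans ((min_le_left _ _).trans (min_le_right _ _))
  · exact min_le_right _ _

lemma le_G (θ : ℝ) (n : ℕ) (p : ℝ × ℝ × ℝ × ℝ) (hp : p ∈ A n) (hn : 0 < n)
    (hv1 : ((n:ℝ)) ^ (-(1/2) : ℝ) ≤ p.2.2.2) (hv2 : p.2.2.2 ≤ 1) :
    HH θ n p.1 p.2.1 p.2.2.1 p.2.2.2 ≤ G θ n p := by
  obtain ⟨s, t, u, v⟩ := p
  obtain ⟨hs, ht, hu, hv⟩ := hp
  simp only at hs ht hu hv hv1 hv2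
  have hn' : (0:ℝ) < n := by exact_mod_cast hn
  have hn1 : (1:ℝ) ≤ n := by exact_mod_cast hn
  have k1 : (n:ℝ)⁻¹ * v ^ (-2:ℝ) ≤ 1 := by
    have := Real.rpow_le_rpow_of_nonpos (z := -2) (by positivity) hv1 (by norm_num)
    rw [← Real.rpow_mul hn'.le, show -(1/2) * (-2) = (1:ℝ) by norm_num, Real.rpow_one] at this
    rw [inv_mul_le_iff₀ hn', mul_one]; exact this
  have k2 : (n:ℝ)⁻¹ ≤ v ^ (-2:ℝ) :=
    (inv_le_one_of_one_le₀ hn1).trans (Real.one_le_rpow_of_pos_of_le_one_of_nonpos hv hv2 (by norm_num))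
  simp only [G, HH]
  rw [min_w u v hu hv, ← mul_assoc, mul_right_comm ((n:ℝ) ^ 2)]
  refine mul_le_mul_of_nonneg_left ?_ (by positivity)
  refine le_min (le_min (le_min ?_ ?_) (le_min ?_ ?_)) ?_
  · refine (min_le_left _ _).trans_eq ?_
    ring
  · exact (min_le_right _ _).trans (min_le_left _ _)
  · refine (min_le_left _ _).trans ?_
    calc _ = (s ^ (4:ℝ) * u ^ (-2:ℝ)) * ((n:ℝ)⁻¹ * v ^ (-2:ℝ)) := by ring
      _ ≤ (s ^ (4:ℝ) * u ^ (-2:ℝ)) * 1 := by gcongr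
      _ = _ := mul_one _
  · refine ((min_le_right _ _).trans (min_le_left _ _)).trans ?_
    rw [mul_comm]; gcongr
  · exact (min_le_right _ _).trans (min_le_right _ _)

lemma upper (θ : ℝ) (n : ℕ) (h0 : 0 < θ) (h1 : θ < 1) (hn : 0 < n) :
    ∫⁻ p in A n, ENNReal.ofReal (G θ n p) ≤
      ENNReal.ofReal ((n : ℝ) ^ (2 - θ) * (1 / (θ ^ 2 * (1 - θ) ^ 3))) := by
  have h3 : 0 < 1 - θ := by linarith
  have hA : MeasurableSet (A n) := by rw [A_eq]; measurability
  calc _ ≤ ∫⁻ p in A n, ENNReal.ofReal (HH θ n p.1 p.2.1 p.2.2.1 p.2.2.2) :=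
        setLIntegral_mono' hA fun p hp => ENNReal.ofReal_le_ofReal (G_le θ n p hp)
    _ = _ := by
      rw [A_eq, full_int θ n h0 h1 hn _ measurableSet_Ioi subset_rfl, gg_int θ h1,
        ← ENNReal.ofReal_mul (by positivity)]
      congr 1
      field_simp

lemma gg_lower (θ : ℝ) (n : ℕ) (h1 : θ < 1) (hn : 0 < n) (h8 : (8:ℝ) ≤ (n:ℝ) ^ (1 - θ)) :
    ENNReal.ofReal (1 / (2 * (1 - θ))) ≤
      ∫⁻ v in Ioc ((n:ℝ) ^ (-(1/2) : ℝ)) 1, ENNReal.ofReal (gg θ v) := by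
  have h3 : 0 < 1 - θ := by linarith
  have hn' : (0:ℝ) < n := by exact_mod_cast hn
  have hn1 : (1:ℝ) ≤ n := by exact_mod_cast hn
  set ε : ℝ := (n:ℝ) ^ (-(1/2) : ℝ) with hε
  have hε0 : 0 < ε := by positivity
  have hε1 : ε ≤ 1 := Real.rpow_le_one_of_one_le_of_nonpos hn1 (by norm_num)
  have e : ∀ v ∈ Ioc ε 1, ENNReal.ofReal (gg θ v) = ENNReal.ofReal (v ^ (-θ)) := by
    intro v hv
    have hv0 : 0 < v := hε0.trans hv.1
    congr 1
    rw [← gg_eq θ v h1 hv0, min_eq_left, Real.one_rpow, one_mul]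
    exact Real.one_le_rpow_of_pos_of_le_one_of_nonpos hv0 hv.2 (by norm_num)
  have hi : IntervalIntegrable (fun x : ℝ => x ^ (-θ)) volume ε 1 :=
    intervalIntegral.intervalIntegrable_rpow' (by linarith)
  rw [setLIntegral_congr_fun measurableSet_Ioc e, ← ofReal_integral_eq_lintegral_ofReal]
  · apply ENNReal.ofReal_le_ofReal
    rw [← intervalIntegral.integral_of_le hε1, integral_rpow (Or.inl (by linarith)),
      Real.one_rpow, show -θ + 1 = 1 - θ by ring]
    have hsq : (ε ^ (1 - θ)) ^ 2 ≤ 1 / 8 := by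
      rw [hε, ← Real.rpow_mul hn'.le, ← Real.rpow_natCast, ← Real.rpow_mul hn'.le]
      rw [show -(1/2) * (1 - θ) * ((2:ℕ):ℝ) = -(1 - θ) by push_cast; ring, Real.rpow_neg hn'.le,
        one_div]
      gcongr
    have : ε ^ (1 - θ) ≤ 1 / 2 := by nlinarith
    rw [div_le_div_iff₀ (by positivity) h3]
    nlinarith
  · exact (intervalIntegrable_iff_integrableOn_Ioc_of_le hε1).1 hi
  · refine (ae_restrict_iff' measurableSet_Ioc).2 (Filter.Eventually.of_forall fun x hx => ?_)
    have := hε0.trans hx.1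
    simp only [Pi.zero_apply]; positivity

lemma lower (θ : ℝ) (n : ℕ) (h0 : 0 < θ) (h1 : θ < 1) (hn : 0 < n)
    (h8 : (8:ℝ) ≤ (n:ℝ) ^ (1 - θ)) :
    ENNReal.ofReal ((n : ℝ) ^ (2 - θ) * (1 / (4 * θ ^ 2 * (1 - θ) ^ 3))) ≤
      ∫⁻ p in A n, ENNReal.ofReal (G θ n p) := by
  have h3 : 0 < 1 - θ := by linarith
  have hn' : (0:ℝ) < n := by exact_mod_cast hn
  set ε : ℝ := (n:ℝ) ^ (-(1/2) : ℝ) with hε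
  have hε0 : 0 < ε := by positivity
  have hV : Ioc ε 1 ⊆ Ioi 0 := fun v hv => hε0.trans hv.1
  have hsub : Ioi (0:ℝ) ×ˢ Ioi (0:ℝ) ×ˢ Ioi (0:ℝ) ×ˢ Ioc ε 1 ⊆ A n := by
    rw [A_eq]; gcongr
  calc _ = ENNReal.ofReal ((n : ℝ) ^ (2 - θ) * (1 / (2 * θ ^ 2 * (1 - θ) ^ 2))) *
        ENNReal.ofReal (1 / (2 * (1 - θ))) := by
        rw [← ENNReal.ofReal_mul (by positivity)]
        congr 1; field_simp; norm_num
    _ ≤ _ := mul_le_mul_right (gg_lower θ n h1 hn h8) _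
    _ = _ := (full_int θ n h0 h1 hn (Ioc ε 1) measurableSet_Ioc hV).symm
    _ ≤ ∫⁻ p in Ioi (0:ℝ) ×ˢ Ioi (0:ℝ) ×ˢ Ioi (0:ℝ) ×ˢ Ioc ε 1, ENNReal.ofReal (G θ n p) :=
        setLIntegral_mono' (by measurability) fun p hp =>
          ENNReal.ofReal_le_ofReal (le_G θ n p (hsub hp) hn hp.2.2.2.1.le hp.2.2.2.2)
    _ ≤ _ := lintegral_mono_set hsub

lemma integral_eq (θ : ℝ) (n : ℕ) :
    ∫ p in A n, G θ n p = (∫⁻ p in A n, ENNReal.ofReal (G θ n p)).toReal := by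
  have hA : MeasurableSet (A n) := by rw [A_eq]; measurability
  have hm : Measurable (G θ n) := by unfold G; fun_prop
  refine integral_eq_lintegral_of_nonneg_ae ?_ hm.aestronglyMeasurable
  refine (ae_restrict_iff' hA).2 (Filter.Eventually.of_forall fun p hp => ?_)
  obtain ⟨hs, ht, hu, hv⟩ := hp
  simp only [Pi.zero_apply, G]
  positivity

theorem stmt_3 :
    (∃ C : ℝ, 0 < C ∧ ∀ θ : ℝ, 0 < θ → θ < 1 → ∀ n : ℕ, 0 < n →
      (∫ p in A n, G θ n p) ≤ C * ((n : ℝ) ^ (2 - θ) * θ ^ (-2 : ℝ) * (1 - θ) ^ (-3 : ℝ))) ∧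
    (∃ c : ℝ, 0 < c ∧ ∀ θ : ℝ, 0 < θ → θ < 1 → ∀ n : ℕ, 0 < n →
      (8 : ℝ) ≤ (n : ℝ) ^ (1 - θ) →
      c * ((n : ℝ) ^ (2 - θ) * θ ^ (-2 : ℝ) * (1 - θ) ^ (-3 : ℝ)) ≤ ∫ p in A n, G θ n p) := by
  have key : ∀ θ : ℝ, 0 < θ → θ < 1 → θ ^ (-2 : ℝ) = 1 / θ ^ 2 ∧
      (1 - θ) ^ (-3 : ℝ) = 1 / (1 - θ) ^ 3 := by
    intro θ h0 h1
    have h3 : 0 < 1 - θ := by linarith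
    constructor
    · rw [Real.rpow_neg h0.le, one_div]; norm_cast
    · rw [Real.rpow_neg h3.le, one_div, ← Real.rpow_natCast]; norm_num
  refine ⟨⟨1, one_pos, fun θ h0 h1 n hn => ?_⟩, ⟨1 / 4, by norm_num, fun θ h0 h1 n hn h8 => ?_⟩⟩
  all_goals
    have h3 : 0 < 1 - θ := by linarith
    obtain ⟨k1, k2⟩ := key θ h0 h1
    have hu := upper θ n h0 h1 hn
    rw [integral_eq, k1, k2]
  · refine (ENNReal.toReal_le_of_le_ofReal (by positivity) hu).trans_eq ?_
    field_simp
  · have hl := lower θ n h0 h1 hn h8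
    rw [ENNReal.ofReal_le_iff_le_toReal (ne_top_of_le_ne_top ENNReal.ofReal_ne_top hu)] at hl
    refine Eq.trans_le ?_ hl
    field_simp
end

section
/- Let Ψ : [0,∞) → [0,∞) satisfy Ψ(0) = 0 and suppose that the function x ↦ Ψ(x)/x is nondecreasing on (0,∞). Then there exists a convex function Ψ̃ : [0,∞) → [0,∞) such that Ψ(x/2) ≤ Ψ̃(x) ≤ Ψ(x) for all x ≥ 0. In particular, if in addition Ψ(2x) ≤ 4 Ψ(x) for all x ≥ 0, then Ψ(x)/4 ≤ Ψ̃(x) ≤ Ψ(x) for all x ≥ 0, so Ψ is equivalent to a convex (Orlicz) function. -/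
theorem stmt_17 (Ψ : ℝ → ℝ) (hΨ0 : Ψ 0 = 0) (hΨnn : ∀ x, 0 ≤ x → 0 ≤ Ψ x)
    (hmono : ∀ x y, 0 < x → x ≤ y → Ψ x / x ≤ Ψ y / y) :
    ∃ Ψt : ℝ → ℝ, ConvexOn ℝ (Set.Ici 0) Ψt ∧ (∀ x, 0 ≤ x → 0 ≤ Ψt x) ∧
      (∀ x, 0 ≤ x → Ψ (x / 2) ≤ Ψt x ∧ Ψt x ≤ Ψ x) ∧
      ((∀ x, 0 ≤ x → Ψ (2 * x) ≤ 4 * Ψ x) → ∀ x, 0 ≤ x → Ψ x / 4 ≤ Ψt x) := by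
  have key : ∀ x, 0 ≤ x → ∀ a : Set.Ici (0:ℝ), Ψ a / a * (x - a) ≤ Ψ x := by
    rintro x hx ⟨a, ha⟩
    have ha : 0 ≤ a := ha
    change Ψ a / a * (x - a) ≤ Ψ x
    have hq : 0 ≤ Ψ a / a := div_nonneg (hΨnn a ha) ha
    rcases ha.eq_or_lt with rfl | ha'
    · simpa using hΨnn x hx
    rcases le_total x a with h | h
    · exact (mul_nonpos_of_nonneg_of_nonpos hq (by linarith)).trans (hΨnn x hx)
    · have hx' : 0 < x := by linarith
      have h1 := hmono a x ha' h
      have h2 : Ψ x / x * x = Ψ x := div_mul_cancel₀ _ hx'.ne'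
      nlinarith [mul_le_mul_of_nonneg_right h1 hx, mul_nonneg hq ha]
  let F : ℝ → ℝ := fun x => ⨆ a : Set.Ici (0:ℝ), Ψ a / a * (x - a)
  have bdd : ∀ x, 0 ≤ x → BddAbove (Set.range fun a : Set.Ici (0:ℝ) => Ψ a / a * (x - a)) := by
    rintro x hx
    refine ⟨Ψ x, ?_⟩
    rintro _ ⟨a, rfl⟩
    exact key x hx a
  have lb : ∀ x, 0 ≤ x → ∀ a : ℝ, 0 ≤ a → Ψ a / a * (x - a) ≤ F x := fun x hx a ha =>
    le_ciSup (bdd x hx) ⟨a, ha⟩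
  have half : ∀ x, 0 ≤ x → Ψ (x / 2) ≤ F x := by
    intro x hx
    have h := lb x hx (x / 2) (by linarith)
    rcases hx.eq_or_lt with rfl | hx'
    · simpa [hΨ0] using h
    · rwa [show x - x / 2 = x / 2 by ring, div_mul_cancel₀ _ (by positivity)] at h
  refine ⟨F, ⟨convex_Ici 0, ?_⟩, ?_, fun x hx => ⟨half x hx, ciSup_le (key x hx)⟩, ?_⟩
  · intro x hx y hy s t hs ht hst
    have hx : 0 ≤ x := hx
    have hy : 0 ≤ y := hy
    refine ciSup_le ?_
    rintro ⟨a, ha⟩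
    have h1 := mul_le_mul_of_nonneg_left (lb x hx a ha) hs
    have h2 := mul_le_mul_of_nonneg_left (lb y hy a ha) ht
    simp only [smul_eq_mul]
    have h3 : Ψ a / a * (s * x + t * y - a)
        = s * (Ψ a / a * (x - a)) + t * (Ψ a / a * (y - a)) := by
      have : s = 1 - t := by linarith
      subst this
      ring
    linarith
  · intro x hx
    simpa using lb x hx 0 le_rfl
  · intro h x hx
    have h1 := h (x / 2) (by linarith)
    rw [show 2 * (x / 2) = x by ring] at h1
    linarith [half x hx]
end
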